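/- Let Ω ⊆ ℂ be a nonempty open set which is simply connected as a topological subspace, and let ω : ℂ → ℝ be twice continuously differentiable on Ω (in the real sense) and harmonic on Ω, i.e. Δω = 0 on Ω. Then there exists a function p : ℂ → ℝ, continuously differentiable on Ω, such that the Cauchy–Riemann conditions ∂ₓω(z) = ∂ᵧp(z) and ∂ᵧω(z) = −∂ₓp(z) hold for every z ∈ Ω; equivalently, the complex-valued function h(z) = p(z) − i·ω(z) is holomorphic on Ω. -/

import Mathlib

open Complex

/-- `∂ₓψ(z)`: real Fréchet derivative of `ψ` at `z` in direction `1`. -/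
noncomputable def pdx (ψ : ℂ → ℝ) (z : ℂ) : ℝ := fderiv ℝ ψ z 1

/-- `∂ᵧψ(z)`: real Fréchet derivative of `ψ` at `z` in direction `i`. -/
noncomputable def pdy (ψ : ℂ → ℝ) (z : ℂ) : ℝ := fderiv ℝ ψ z Complex.I

/-- Laplacian `Δψ = ∂ₓ∂ₓψ + ∂ᵧ∂ᵧψ`. -/
noncomputable def lap (ψ : ℂ → ℝ) (z : ℂ) : ℝ := pdx (pdx ψ) z + pdy (pdy ψ) z


section HC
open Set Metric Topology

/-- `ℂ` with the discrete topology. -/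
def DiscC : Type := ℂ

noncomputable instance : AddCommGroup DiscC := inferInstanceAs (AddCommGroup ℂ)
instance : TopologicalSpace DiscC := ⊥
instance : DiscreteTopology DiscC := ⟨rfl⟩

lemma const_diff {g F G : ℂ → ℂ} {U : Set ℂ} (hU : IsOpen U) (hc : IsPreconnected U)
    (hF : ∀ z ∈ U, HasDerivAt F (g z) z) (hG : ∀ z ∈ U, HasDerivAt G (g z) z) :
    ∃ c : ℂ, ∀ z ∈ U, F z - G z = c := by
  have h : ∀ z ∈ U, HasDerivAt (fun w => F w - G w) 0 z := fun z hz => by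
    have := (hF z hz).fun_sub (hG z hz)
    rwa [sub_self] at this
  exact hU.exists_is_const_of_deriv_eq_zero hc
    (fun z hz => (h z hz).differentiableAt.differentiableWithinAt) (fun z hz => (h z hz).deriv)

/-- The bundle of local primitives. -/
noncomputable def primCore (Ω : Set ℂ) (g : ℂ → ℂ) (r : Ω → ℝ) (hr : ∀ x, 0 < r x)
    (hrΩ : ∀ x : Ω, ball (x : ℂ) (r x) ⊆ Ω) (F : Ω → ℂ → ℂ)
    (hF : ∀ x : Ω, ∀ z ∈ ball (x : ℂ) (r x), HasDerivAt (F x) (g z) z) :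
    FiberBundleCore Ω Ω DiscC where
  baseSet x := Subtype.val ⁻¹' ball (x : ℂ) (r x)
  isOpen_baseSet x := isOpen_ball.preimage continuous_subtype_val
  indexAt := id
  mem_baseSet_at x := by simp [hr x]
  coordChange i j x v := v + (show DiscC from (F i x - F j x : ℂ))
  coordChange_self i x _ v := by
    have : (F i x - F i x : ℂ) = (0 : ℂ) := sub_self _
    rw [this]; exact add_zero v
  continuousOn_coordChange i j := by
    obtain ⟨c, hc⟩ := const_diff (g := g) (F := F i) (G := F j)
      (U := ball (i : ℂ) (r i) ∩ ball (j : ℂ) (r j)) (isOpen_ball.inter isOpen_ball)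
      ((convex_ball _ _).inter (convex_ball _ _)).isPreconnected
      (fun z hz => hF i z hz.1) (fun z hz => hF j z hz.2)
    have h : Continuous (fun p : Ω × DiscC => p.2 + (show DiscC from c)) :=
      (continuous_of_discreteTopology (f := fun v : DiscC => v + (show DiscC from c))).comp
        continuous_snd
    refine h.continuousOn.congr fun p hp => ?_
    have := hc p.1 ⟨hp.1.1, hp.1.2⟩
    simp only [this]
  coordChange_comp i j k x _ v := by
    have : ∀ a b c d : ℂ, a + (b - c) + (c - d) = a + (b - d) := by intros; ring
    exact this (id v) (F i x) (F j x) (F k x)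

theorem exists_primitive (Ω : Set ℂ) (hΩ : IsOpen Ω) (hne : Ω.Nonempty)
    (hsc : SimplyConnectedSpace Ω) (g : ℂ → ℂ) (hg : DifferentiableOn ℂ g Ω) :
    ∃ H : ℂ → ℂ, ∀ z ∈ Ω, HasDerivAt H (g z) z := by
  classical
  have h1 : ∀ x : Ω, ∃ r > 0, ball (x : ℂ) r ⊆ Ω := fun x => Metric.isOpen_iff.1 hΩ x x.2
  choose r hr hrΩ using h1
  have h2 : ∀ x : Ω, ∃ F : ℂ → ℂ, ∀ z ∈ ball (x : ℂ) (r x), HasDerivAt F (g z) z := fun x =>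
    (hg.mono (hrΩ x)).isExactOn_ball
  choose F hF using h2
  let Z := primCore Ω g r hr hrΩ F hF
  have hcov : IsCoveringMap (Bundle.TotalSpace.proj : Z.TotalSpace → Ω) :=
    FiberBundle.isCoveringMap (F := DiscC) (E := Z.Fiber)
  have := hΩ.locallyPathConnectedSpace
  obtain ⟨x₀, hx₀⟩ := hne
  obtain ⟨s, ⟨-, hs⟩, -⟩ := hcov.existsUnique_continuousMap_lifts (ContinuousMap.id Ω) ⟨x₀, hx₀⟩
    (⟨⟨x₀, hx₀⟩, (0 : DiscC)⟩ : Z.TotalSpace) rfl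
  have hs' : ∀ x, (s x).1 = x := fun x => congrFun hs x
  let v : Ω → ℂ := fun x => (show ℂ from (s x).2)
  refine ⟨fun z => if hz : z ∈ Ω then F ⟨z, hz⟩ z + v ⟨z, hz⟩ else 0, fun z hz => ?_⟩
  let i : Ω := ⟨z, hz⟩
  -- the local coordinate of the section
  let q : Ω → DiscC := fun x => (Z.localTriv i (s x)).2
  have hq : ∀ x, (show ℂ from q x) = v x + (F x x - F i x) := fun x => by
    change v x + (F (s x).1 (s x).1 - F i (s x).1) = _
    rw [hs']
  have hqc : ContinuousAt q i := by
    have hmem : s i ∈ (Z.localTriv i).source := by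
      rw [FiberBundleCore.mem_localTriv_source, hs']
      exact Z.mem_baseSet_at i
    exact continuousAt_snd.comp
      (((Z.localTriv i).continuousAt hmem).comp s.continuous.continuousAt)
  have hloc : ∀ᶠ x in 𝓝 i, q x = q i := by
    have : ({q i} : Set DiscC) ∈ 𝓝 (q i) := (isOpen_discrete _).mem_nhds rfl
    exact hqc this
  have hloc2 : ∀ᶠ w in 𝓝 z, ∀ hw : w ∈ Ω, q ⟨w, hw⟩ = q i := by
    rw [nhds_subtype_eq_comap, Filter.eventually_comap] at hloc
    filter_upwards [hloc] with w hw hwΩ using hw ⟨w, hwΩ⟩ rfl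
  have hd : HasDerivAt (fun w => F i w + (show ℂ from q i)) (g z) z :=
    (hF i z (mem_ball_self (hr i))).add_const _
  refine hd.congr_of_eventuallyEq ?_
  filter_upwards [hloc2, hΩ.mem_nhds hz] with w hw hwΩ
  have h3 := hq ⟨w, hwΩ⟩
  rw [hw hwΩ] at h3
  have h4 : ∀ a b c d : ℂ, a = b + (c - d) → c + b = d + a := by
    intro a b c d h; rw [h]; ring
  simp only [hwΩ, dif_pos]
  exact h4 _ _ _ _ h3

theorem fderiv_one_I (f : ℂ → ℝ) (z w : ℂ) :
    fderiv ℝ f z w = w.re * pdx f z + w.im * pdy f z := by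
  conv_lhs => rw [(by simp : w = w.re • (1 : ℂ) + w.im • (I : ℂ))]
  rw [map_add, map_smul, map_smul]
  rfl

end HC

/-- Every harmonic function `ω` on a nonempty simply connected open set `Ω` has a
harmonic conjugate `p` satisfying the Cauchy–Riemann conditions
`∂ₓω = ∂ᵧp`, `∂ᵧω = −∂ₓp` on `Ω`; equivalently, `h = p − i ω` is holomorphic on `Ω`. -/
theorem harmonic_conjugate_exists (Ω : Set ℂ) (hΩ : IsOpen Ω) (hne : Ω.Nonempty)
    (hsc : SimplyConnectedSpace Ω)
    (ω : ℂ → ℝ) (hω : ContDiffOn ℝ 2 ω Ω)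
    (hharm : ∀ z ∈ Ω, lap ω z = 0) :
    ∃ p : ℂ → ℝ, ContDiffOn ℝ 1 p Ω ∧
      (∀ z ∈ Ω, pdx ω z = pdy p z ∧ pdy ω z = -pdx p z) ∧
      DifferentiableOn ℂ (fun z => (p z : ℂ) - Complex.I * (ω z : ℂ)) Ω := by
  have hlap : ∀ z ∈ Ω, (Laplacian.laplacian ω : ℂ → ℝ) z = 0 := by
    intro z hz
    have hc : ContDiffAt ℝ 2 ω z := hω.contDiffAt (hΩ.mem_nhds hz)
    have hd : DifferentiableAt ℝ (fderiv ℝ ω) z :=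
      (hc.fderiv_right (m := 1) (by norm_num)).differentiableAt (by norm_num)
    have h := hharm z hz
    have e : ∀ u : ℂ, fderiv ℝ (fun w => fderiv ℝ ω w u) z u = fderiv ℝ (fderiv ℝ ω) z u u := by
      intro u
      rw [fderiv_clm_apply hd (by fun_prop)]
      simp
    have h' : fderiv ℝ (fderiv ℝ ω) z 1 1 + fderiv ℝ (fderiv ℝ ω) z I I = 0 := by
      rw [← e, ← e]; exact h
    rw [InnerProductSpace.laplacian_eq_iteratedFDeriv_complexPlane]
    simpa [iteratedFDeriv_two_apply] using h'
  have hh : ∀ z ∈ Ω, InnerProductSpace.HarmonicAt ω z := fun z hz =>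
    ⟨hω.contDiffAt (hΩ.mem_nhds hz), by
      filter_upwards [hΩ.mem_nhds hz] with w hw using hlap w hw⟩
  obtain ⟨H, hH⟩ := exists_primitive Ω hΩ hne hsc
    (fun z => -I * (fderiv ℝ ω z 1 - I * fderiv ℝ ω z I))
    (fun z hz => ((HarmonicAt.differentiableAt_complex_partial (hh z hz)).const_mul
      (-I)).differentiableWithinAt)
  have hHd : DifferentiableOn ℂ H Ω := fun z hz => (hH z hz).differentiableAt.differentiableWithinAt
  have hp : ∀ z ∈ Ω, HasFDerivAt (fun z => (H z).re) (reCLM.comp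
      ((ContinuousLinearMap.toSpanSingleton ℂ
        (-I * (fderiv ℝ ω z 1 - I * fderiv ℝ ω z I : ℂ))).restrictScalars ℝ)) z := fun z hz =>
    reCLM.hasFDerivAt.comp z ((hH z hz).hasFDerivAt.restrictScalars ℝ)
  have hpx : ∀ z ∈ Ω, pdx (fun z => (H z).re) z = - pdy ω z := fun z hz => by
    rw [pdx, (hp z hz).fderiv]; simp [pdy]
  have hpy : ∀ z ∈ Ω, pdy (fun z => (H z).re) z = pdx ω z := fun z hz => by
    rw [pdy, (hp z hz).fderiv]; simp [pdx]
  refine ⟨fun z => (H z).re, ?_, fun z hz => ⟨(hpy z hz).symm, by rw [hpx z hz, neg_neg]⟩, ?_⟩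
  · exact reCLM.contDiff.comp_contDiffOn
      ((hHd.contDiffOn (n := 1) hΩ).restrict_scalars ℝ)
  · intro z hz
    have hc : DifferentiableAt ℝ ω z :=
      (hω.contDiffAt (hΩ.mem_nhds hz)).differentiableAt (by norm_num)
    have h1 : HasFDerivAt (fun z => ((H z).re : ℂ)) _ z :=
      ofRealCLM.hasFDerivAt.comp z (hp z hz).differentiableAt.hasFDerivAt
    have h2 : HasFDerivAt (fun z => (ω z : ℂ)) _ z :=
      ofRealCLM.hasFDerivAt.comp z hc.hasFDerivAt
    have h3 := h1.sub (h2.const_mul I)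
    refine DifferentiableAt.differentiableWithinAt ?_
    refine differentiableAt_complex_iff_differentiableAt_real.2 ⟨h3.differentiableAt, ?_⟩
    have h4 := h3.fderiv
    change fderiv ℝ (fun z => ((H z).re : ℂ) - I * (ω z : ℂ)) z = _ at h4
    rw [h4]
    have a1 := hpx z hz
    have a2 := hpy z hz
    simp only [pdx, pdy] at a1 a2
    simp [a1, a2, Complex.ext_iff]
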